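/- Let X, Y ⊆ ω. There exists an embedding of pcas of K2^X into B^Y if and only if X is Turing reducible to Y. -/

import Mathlib

namespace PCAEmb

/-! ### Oracle computability -/

/-- Codes for partial functions computable relative to an oracle. -/
inductive OCode : Type
  | zero : OCode
  | succ : OCode
  | left : OCode
  | right : OCode
  | oracle : OCode
  | pair : OCode → OCode → OCode
  | comp : OCode → OCode → OCode
  | prec : OCode → OCode → OCode
  | rfind' : OCode → OCode

/-- Evaluation of an oracle code, relative to a (partial) oracle `O`. -/
def evalo (O : ℕ →. ℕ) : OCode → ℕ →. ℕ
  | .zero => pure 0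
  | .succ => Nat.succ
  | .left => ↑fun n : ℕ => n.unpair.1
  | .right => ↑fun n : ℕ => n.unpair.2
  | .oracle => O
  | .pair cf cg => fun n => Nat.pair <$> evalo O cf n <*> evalo O cg n
  | .comp cf cg => fun n => evalo O cg n >>= evalo O cf
  | .prec cf cg =>
      Nat.unpaired fun a n =>
        n.rec (evalo O cf a) fun y IH => do
          let i ← IH
          evalo O cg (Nat.pair a (Nat.pair y i))
  | .rfind' cf =>
      Nat.unpaired fun a m =>
        (Nat.rfind fun n => (fun x => x = 0) <$> evalo O cf (Nat.pair a (n + m))).map (· + m)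

/-- The standard numbering of oracle codes. -/
def OCode.ofNat : ℕ → OCode
  | 0 => .zero
  | 1 => .succ
  | 2 => .left
  | 3 => .right
  | 4 => .oracle
  | n + 5 =>
    match n % 4 with
    | 0 => .pair (OCode.ofNat (n / 4).unpair.1) (OCode.ofNat (n / 4).unpair.2)
    | 1 => .comp (OCode.ofNat (n / 4).unpair.1) (OCode.ofNat (n / 4).unpair.2)
    | 2 => .prec (OCode.ofNat (n / 4).unpair.1) (OCode.ofNat (n / 4).unpair.2)
    | _ => .rfind' (OCode.ofNat (n / 4).unpair.1)
  decreasing_by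
    all_goals
      have h1 := Nat.unpair_left_le (n / 4)
      have h2 := Nat.unpair_right_le (n / 4)
      have h3 := Nat.div_le_self n 4
      omega

/-- The `e`-th Turing functional with oracle `O` : `Φ_e^O`. -/
def phi (O : ℕ →. ℕ) (e : ℕ) : ℕ →. ℕ := evalo O (OCode.ofNat e)

/-- The characteristic function of a set of naturals, as a (total) partial function. -/
noncomputable def chi (X : Set ℕ) : ℕ →. ℕ :=
  fun n => Part.some (X.indicator (fun _ => 1) n)

/-- `ψ` is partial computable relative to the oracle `O`. -/
def RecursiveIn (O : ℕ →. ℕ) (ψ : ℕ →. ℕ) : Prop := ∃ c : OCode, evalo O c = ψ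

/-- Turing reducibility of sets of naturals. -/
def TuringLE (X Y : Set ℕ) : Prop := RecursiveIn (chi Y) (chi X)

/-- A total function `d : ℕ → ℕ` is `Y`-computable. -/
def ComputableIn (Y : Set ℕ) (d : ℕ → ℕ) : Prop :=
  RecursiveIn (chi Y) (fun n => Part.some (d n))

/-- A binary relation on `ℕ` is `Y`-c.e. -/
def CEIn (Y : Set ℕ) (R : ℕ → ℕ → Prop) : Prop :=
  ∃ c : OCode, ∀ n m, R n m ↔ (evalo (chi Y) c (Nat.pair n m)).Dom

/-- A set `W ⊆ ℕ` is `Y`-c.e. -/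
def CE1In (Y : Set ℕ) (W : Set ℕ) : Prop :=
  ∃ c : OCode, ∀ n, n ∈ W ↔ (evalo (chi Y) c n).Dom

/-- The canonical finite set `D_u` with code `u` (binary coding). -/
def Du (u : ℕ) : Set ℕ := {k | u.testBit k}

/-- Enumeration reducibility: `Z ≤ₑ Y`. -/
def EnumLE (Z Y : Set ℕ) : Prop :=
  ∃ W : Set ℕ, CE1In ∅ W ∧ ∀ x, x ∈ Z ↔ ∃ u, Nat.pair x u ∈ W ∧ Du u ⊆ Y

/-- The Turing jump `X'` of a set `X`. -/
def jump (X : Set ℕ) : Set ℕ := {e | (phi (chi X) e e).Dom}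

/-- The halting set `K = {e : φ_e(e)↓}`. -/
def Khalt : Set ℕ := jump ∅

/-! ### Partial combinatory algebras -/

/-- `k·a·b` as a partial element. -/
def app2 {α : Type*} (app : α → α → Part α) (a b c : α) : Part α :=
  (app a b).bind fun x => app x c

/-- `s·a·b·c` as a partial element. -/
def app3 {α : Type*} (app : α → α → Part α) (a b c d : α) : Part α :=
  (app2 app a b c).bind fun x => app x d

/-- A partial applicative structure is a pca if it has (distinct) combinators `s` and `k`. -/
def IsPCA {α : Type*} (app : α → α → Part α) : Prop :=
  ∃ s k : α, s ≠ k ∧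
    (∀ a b : α, app2 app k a b = Part.some a) ∧
    (∀ a b : α, (app2 app s a b).Dom) ∧
    (∀ a b c : α,
      app3 app s a b c = (app a c).bind fun x => (app b c).bind fun y => app x y)

/-- An embedding of partial combinatory algebras: an injection that preserves
(defined) application. -/
def IsPCAEmbedding {α β : Type*} (appA : α → α → Part α) (appB : β → β → Part β)
    (f : α → β) : Prop :=
  Function.Injective f ∧ ∀ a a' c : α, c ∈ appA a a' → f c ∈ appB (f a) (f a')

/-! ### Partial numberings -/

/-- `γ : ℕ ⇀ α` is a partial numbering (i.e. surjective). -/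
def IsNumbering {α : Type*} (γ : ℕ →. α) : Prop := ∀ a : α, ∃ n, a ∈ γ n

/-- `d` is an `(a⊥, a⊤)`-decider for `X` with respect to `γ`. -/
def IsDecider {α : Type*} (γ : ℕ →. α) (abot atop : α) (X : Set ℕ) (d : ℕ → ℕ) : Prop :=
  ∀ n, (n ∉ X → γ (d n) = Part.some abot) ∧ (n ∈ X → γ (d n) = Part.some atop)

/-- `γ` has `Y`-c.e. inequivalence. -/
def CEInequiv {α : Type*} (Y : Set ℕ) (γ : ℕ →. α) : Prop :=
  ∃ R : ℕ → ℕ → Prop, CEIn Y R ∧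
    ∀ n m, (γ n).Dom → (γ m).Dom → (R n m ↔ γ n ≠ γ m)

/-- `γ` is a `Y`-effectively pca-valued partial numbering: the application is
represented on codes by a partial `Y`-computable function `ψ`. -/
def EffValued {α : Type*} (Y : Set ℕ) (app : α → α → Part α) (γ : ℕ →. α) : Prop :=
  ∃ ψ : ℕ →. ℕ, RecursiveIn (chi Y) ψ ∧
    ∀ (n m : ℕ) (a b c : α), a ∈ γ n → b ∈ γ m → c ∈ app a b →
      ∃ j, j ∈ ψ (Nat.pair n m) ∧ c ∈ γ j

/-- `γ` is a strongly `Y`-effectively pca-valued partial numbering. -/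
def StrongEffValued {α : Type*} (Y : Set ℕ) (app : α → α → Part α) (γ : ℕ →. α) : Prop :=
  ∃ ψ : ℕ →. ℕ, RecursiveIn (chi Y) ψ ∧
    (∀ (n m : ℕ) (a b c : α), a ∈ γ n → b ∈ γ m → c ∈ app a b →
      ∃ j, j ∈ ψ (Nat.pair n m) ∧ c ∈ γ j) ∧
    (∀ (n m k l : ℕ) (a b a' b' c : α), a ∈ γ n → b ∈ γ m → a' ∈ γ k → b' ∈ γ l →
      c ∈ app a b → c ∈ app a' b' → ψ (Nat.pair n m) = ψ (Nat.pair k l))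

/-! ### The models -/

/-- Kleene's first model relativized to `X`: application `n · m = Φ_n^X(m)`. -/
noncomputable def k1App (X : Set ℕ) : ℕ → ℕ → Part ℕ := fun n m => phi (chi X) n m

/-- A total function as a partial function. -/
def toPFun (g : ℕ → ℕ) : ℕ →. ℕ := fun n => Part.some (g n)

/-- Join `f ⊕ g` of two partial functions. -/
def pjoin (f g : ℕ →. ℕ) : ℕ →. ℕ := fun n =>
  if n % 2 = 0 then f (n / 2) else g (n / 2)

/-- The totalization of a partial function, as a partial element of `ℕ → ℕ`:
defined iff `ψ` is total. -/
def partToTotal (ψ : ℕ →. ℕ) : Part (ℕ → ℕ) :=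
  ⟨∀ n, (ψ n).Dom, fun H n => (ψ n).get (H n)⟩

/-- Application in Kleene's second model `K₂`: `g · h = Φ^{g⊕h}_{g 0}`,
defined iff this function is total. -/
def k2App (g h : ℕ → ℕ) : Part (ℕ → ℕ) :=
  partToTotal (phi (pjoin (toPFun g) (toPFun h)) (g 0))

/-- Application in van Oosten's sequential model `B`: `θ · ρ = Φ^{θ⊕ρ}_{θ 0}`
(always defined, as a partial function). -/
def bApp (θ ρ : ℕ →. ℕ) : Part (ℕ →. ℕ) :=
  Part.some (fun n => (θ 0).bind fun e => phi (pjoin θ ρ) e n)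

/-- Restriction of a partial applicative structure to a subset. -/
def subApp {α : Type*} (app : α → α → Part α) (P : α → Prop)
    (a b : Subtype P) : Part (Subtype P) :=
  (app a.1 b.1).bind fun c => Part.assert (P c) fun h => Part.some ⟨c, h⟩

/-- Carrier of `K₂^X` : the total `X`-computable functions. -/
def K2el (X : Set ℕ) : Type := {g : ℕ → ℕ // RecursiveIn (chi X) (toPFun g)}

/-- Application in `K₂^X`. -/
def k2XApp (X : Set ℕ) : K2el X → K2el X → Part (K2el X) :=
  subApp k2App _

/-- Carrier of `B^X` : the partial `X`-computable functions. -/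
def Bel (X : Set ℕ) : Type := {θ : ℕ →. ℕ // RecursiveIn (chi X) θ}

/-- Application in `B^X`. -/
def bXApp (X : Set ℕ) : Bel X → Bel X → Part (Bel X) :=
  subApp bApp _

/-- Application in Scott's graph model `G`. -/
def gApp (A B : Set ℕ) : Part (Set ℕ) :=
  Part.some {n | ∃ u, Nat.pair n u ∈ A ∧ Du u ⊆ B}

/-- Carrier of `G^Z` : the sets enumeration-reducible to `Z`. -/
def Gel (Z : Set ℕ) : Type := {A : Set ℕ // EnumLE A Z}

/-- Application in `G^Z`. -/
def gXApp (Z : Set ℕ) : Gel Z → Gel Z → Part (Gel Z) :=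
  subApp gApp _

/-- `X ⊕ X̄ = {2n : n ∈ X} ∪ {2n+1 : n ∉ X}`. -/
def joinCompl (X : Set ℕ) : Set ℕ :=
  {k | ∃ n, (k = 2 * n ∧ n ∈ X) ∨ (k = 2 * n + 1 ∧ n ∉ X)}

/-! ### The λ-calculus -/

/-- Untyped λ-terms (de Bruijn representation). -/
inductive Lam : Type
  | var : ℕ → Lam
  | app : Lam → Lam → Lam
  | abs : Lam → Lam

/-- Lift (shift up) the free variables `≥ d` of a term. -/
def Lam.lift : Lam → ℕ → Lam
  | .var n, d => if n < d then .var n else .var (n + 1)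
  | .app M N, d => .app (M.lift d) (N.lift d)
  | .abs M, d => .abs (M.lift (d + 1))

/-- Substitution `M[k := N]` (de Bruijn). -/
def Lam.subst : Lam → ℕ → Lam → Lam
  | .var n, k, N => if n = k then N else if k < n then .var (n - 1) else .var n
  | .app M M', k, N => .app (M.subst k N) (M'.subst k N)
  | .abs M, k, N => .abs (M.subst (k + 1) (N.lift 0))

/-- β-equivalence of λ-terms. -/
inductive BetaEq : Lam → Lam → Prop
  | beta (M N : Lam) : BetaEq (.app (.abs M) N) (M.subst 0 N)
  | refl (M : Lam) : BetaEq M M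
  | symm {M N : Lam} : BetaEq M N → BetaEq N M
  | trans {M N P : Lam} : BetaEq M N → BetaEq N P → BetaEq M P
  | appCongr {M M' N N' : Lam} :
      BetaEq M M' → BetaEq N N' → BetaEq (.app M N) (.app M' N')
  | absCongr {M M' : Lam} : BetaEq M M' → BetaEq (.abs M) (.abs M')

/-- βη-equivalence of λ-terms. -/
inductive BetaEtaEq : Lam → Lam → Prop
  | beta (M N : Lam) : BetaEtaEq (.app (.abs M) N) (M.subst 0 N)
  | eta (M : Lam) : BetaEtaEq (.abs (.app (M.lift 0) (.var 0))) M
  | refl (M : Lam) : BetaEtaEq M M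
  | symm {M N : Lam} : BetaEtaEq M N → BetaEtaEq N M
  | trans {M N P : Lam} : BetaEtaEq M N → BetaEtaEq N P → BetaEtaEq M P
  | appCongr {M M' N N' : Lam} :
      BetaEtaEq M M' → BetaEtaEq N N' → BetaEtaEq (.app M N) (.app M' N')
  | absCongr {M M' : Lam} : BetaEtaEq M M' → BetaEtaEq (.abs M) (.abs M')

def lamBetaSetoid : Setoid Lam := ⟨BetaEq, ⟨BetaEq.refl, BetaEq.symm, BetaEq.trans⟩⟩

def lamBetaEtaSetoid : Setoid Lam :=
  ⟨BetaEtaEq, ⟨BetaEtaEq.refl, BetaEtaEq.symm, BetaEtaEq.trans⟩⟩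

/-- The pca `λ` of λ-terms modulo β-equivalence. -/
def LamBeta : Type := Quotient lamBetaSetoid

/-- The pca `λη` of λ-terms modulo βη-equivalence. -/
def LamBetaEta : Type := Quotient lamBetaEtaSetoid

/-- Application in `λ` (total). -/
def lamBetaApp : LamBeta → LamBeta → Part LamBeta := fun a b =>
  Part.some (Quotient.map₂ Lam.app (fun _ _ h1 _ _ h2 => BetaEq.appCongr h1 h2) a b)

/-- Application in `λη` (total). -/
def lamBetaEtaApp : LamBetaEta → LamBetaEta → Part LamBetaEta := fun a b =>
  Part.some (Quotient.map₂ Lam.app (fun _ _ h1 _ _ h2 => BetaEtaEq.appCongr h1 h2) a b)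

/-!
Let `f` preserve application and let `θ n` be its value at the constant function `n`. Every
uniformly `X`-computable sequence `u` is represented in `K₂^X` on constant functions: an element
`x` with `x · n = u n` carries the values of all the `u n` as oracle, so `f (u n)` arises from
`θ n` by one fixed application. For the sequence of successors this says that `θ (n + 1)` arises
from `θ n`, so the `θ n`, and hence all `f (u n)`, are `Y`-computable uniformly in `n`. If `f` is
not constant, choose `g` and `h` such that `f g` takes at some `m` a value `v` which `f h` does not
take there. If `Z` is computable in `X`, let `u n` be `g` for `n ∈ Z` and `h` otherwise; then
`n ∈ Z` iff `f (u n) m = v`, a `Y`-c.e. condition. Taking `Z = X` and `Z = Xᶜ`, Post's theorem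
gives that `X` is computable in `Y`. Conversely, if `X` is computable in `Y`, inclusion is an
embedding.

Uniform computability and Post's theorem both rest on the use principle: a computation from `g` is
the increasing limit of computations from the initial segments of `g`, and the latter are
computable without any oracle.
-/

open Filter Encodable
open Denumerable (ofNat)
open Nat.Partrec (Code)

section Codes

variable {O P f g : ℕ →. ℕ} {n v : ℕ}

theorem evalo_comp (O : ℕ →. ℕ) (cf cg : OCode) (n : ℕ) :
    evalo O (.comp cf cg) n = (evalo O cg n).bind fun x => evalo O cf x := rfl

theorem evalo_comp_of_eq_some {cf cg : OCode} (hg : evalo O cg n = Part.some v) :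
    evalo O (.comp cf cg) n = evalo O cf v := by
  rw [evalo_comp, hg, Part.bind_some]

theorem mem_evalo_pair {cf cg : OCode} :
    v ∈ evalo O (.pair cf cg) n ↔
      ∃ x ∈ evalo O cf n, ∃ y ∈ evalo O cg n, Nat.pair x y = v := by
  simp [evalo, Seq.seq]

theorem evalo_prec_zero (O : ℕ →. ℕ) (cf cg : OCode) (a : ℕ) :
    evalo O (.prec cf cg) (Nat.pair a 0) = evalo O cf a := by
  simp [evalo]

theorem evalo_prec_succ (O : ℕ →. ℕ) (cf cg : OCode) (a m : ℕ) :
    evalo O (.prec cf cg) (Nat.pair a (m + 1)) =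
      (evalo O (.prec cf cg) (Nat.pair a m)).bind fun i =>
        evalo O cg (Nat.pair a (Nat.pair m i)) := by
  simp [evalo]

theorem mem_rfind_eq_zero {q : ℕ → Part ℕ} {r : ℕ} :
    r ∈ (Nat.rfind fun n => (fun x => decide (x = 0)) <$> q n) ↔
      0 ∈ q r ∧ ∀ j < r, ∃ x ∈ q j, x ≠ 0 :=
  Nat.mem_rfind.trans (by simp)

theorem mem_evalo_rfind' {cf : OCode} {a m : ℕ} :
    v ∈ evalo O (.rfind' cf) (Nat.pair a m) ↔
      ∃ r, 0 ∈ evalo O cf (Nat.pair a (r + m)) ∧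
        (∀ j < r, ∃ x ∈ evalo O cf (Nat.pair a (j + m)), x ≠ 0) ∧ r + m = v := by
  simp only [evalo, Nat.unpaired, Nat.unpair_pair, Part.mem_map_iff, mem_rfind_eq_zero, and_assoc]

theorem OCode.ofNat_surjective : Function.Surjective OCode.ofNat := by
  have add_five (p r : ℕ) (hr : r < 4) : (4 * p + r) % 4 = r ∧ (4 * p + r) / 4 = p := by omega
  intro c
  induction c with
  | zero => exact ⟨0, by simp [OCode.ofNat]⟩
  | succ => exact ⟨1, by simp [OCode.ofNat]⟩
  | left => exact ⟨2, by simp [OCode.ofNat]⟩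
  | right => exact ⟨3, by simp [OCode.ofNat]⟩
  | oracle => exact ⟨4, by simp [OCode.ofNat]⟩
  | pair cf cg hf hg =>
    obtain ⟨⟨a, rfl⟩, b, rfl⟩ := And.intro hf hg
    exact ⟨4 * Nat.pair a b + 0 + 5, by simp [OCode.ofNat]⟩
  | comp cf cg hf hg =>
    obtain ⟨⟨a, rfl⟩, b, rfl⟩ := And.intro hf hg
    exact ⟨4 * Nat.pair a b + 1 + 5, by simp [OCode.ofNat, add_five]⟩
  | prec cf cg hf hg =>
    obtain ⟨⟨a, rfl⟩, b, rfl⟩ := And.intro hf hg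
    exact ⟨4 * Nat.pair a b + 2 + 5, by simp [OCode.ofNat, add_five]⟩
  | rfind' cf hf =>
    obtain ⟨a, rfl⟩ := hf
    exact ⟨4 * Nat.pair a 0 + 3 + 5, by simp [OCode.ofNat, add_five]⟩

theorem RecursiveIn.of_eq (hf : RecursiveIn O f) (h : ∀ n, f n = g n) : RecursiveIn O g :=
  funext h ▸ hf

theorem RecursiveIn.pair (hf : RecursiveIn O f) (hg : RecursiveIn O g) :
    RecursiveIn O fun n => Nat.pair <$> f n <*> g n := by
  obtain ⟨⟨cf, rfl⟩, cg, rfl⟩ := And.intro hf hg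
  exact ⟨.pair cf cg, rfl⟩

theorem RecursiveIn.comp (hf : RecursiveIn O f) (hg : RecursiveIn O g) :
    RecursiveIn O fun n => (g n).bind fun x => f x := by
  obtain ⟨⟨cf, rfl⟩, cg, rfl⟩ := And.intro hf hg
  exact ⟨.comp cf cg, rfl⟩

theorem RecursiveIn.prec (hf : RecursiveIn O f) (hg : RecursiveIn O g) :
    RecursiveIn O <| Nat.unpaired fun a n =>
      n.rec (motive := fun _ => Part ℕ) (f a) fun y IH =>
        IH.bind fun i => g (Nat.pair a (Nat.pair y i)) := by
  obtain ⟨⟨cf, rfl⟩, cg, rfl⟩ := And.intro hf hg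
  exact ⟨.prec cf cg, rfl⟩

theorem RecursiveIn.rfind' (hf : RecursiveIn O f) :
    RecursiveIn O <| Nat.unpaired fun a m =>
      (Nat.rfind fun n => (fun x => x = 0) <$> f (Nat.pair a (n + m))).map (· + m) := by
  obtain ⟨cf, rfl⟩ := hf
  exact ⟨.rfind' cf, rfl⟩

theorem RecursiveIn.oracle (O : ℕ →. ℕ) : RecursiveIn O O := ⟨.oracle, rfl⟩

theorem RecursiveIn.id (O : ℕ →. ℕ) : RecursiveIn O (toPFun fun n => n) :=
  ⟨.pair .left .right, by funext n; simp [evalo, toPFun, Seq.seq]⟩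

theorem RecursiveIn.rfind (hf : RecursiveIn O f) :
    RecursiveIn O fun a => Nat.rfind fun n => (fun x => x = 0) <$> f (Nat.pair a n) := by
  obtain ⟨c, rfl⟩ := hf
  obtain ⟨i, hi⟩ := RecursiveIn.id O
  refine ⟨.comp (.rfind' c) (.pair i .zero), funext fun a => Part.ext fun v => ?_⟩
  have hpair : evalo O (.pair i .zero) a = Part.some (Nat.pair a 0) := by
    simp [evalo, hi, toPFun, Seq.seq, pure, PFun.pure]
  rw [evalo_comp_of_eq_some hpair, mem_evalo_rfind', mem_rfind_eq_zero]
  simp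

theorem RecursiveIn.trans (hf : RecursiveIn P f) (hP : RecursiveIn O P) : RecursiveIn O f := by
  obtain ⟨c, rfl⟩ := hf
  induction c with
  | zero => exact ⟨.zero, rfl⟩
  | succ => exact ⟨.succ, rfl⟩
  | left => exact ⟨.left, rfl⟩
  | right => exact ⟨.right, rfl⟩
  | oracle => exact hP
  | pair _ _ hf hg => exact .pair hf hg
  | comp _ _ hf hg => exact .comp hf hg
  | prec _ _ hf hg => exact .prec hf hg
  | rfind' _ hf => exact .rfind' hf

theorem RecursiveIn.of_partrec (hf : Nat.Partrec f) : RecursiveIn O f := by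
  induction hf with
  | zero => exact ⟨.zero, rfl⟩
  | succ => exact ⟨.succ, rfl⟩
  | left => exact ⟨.left, rfl⟩
  | right => exact ⟨.right, rfl⟩
  | pair _ _ hf hg => exact .pair hf hg
  | comp _ _ hf hg => exact .comp hf hg
  | prec _ _ hf hg => exact .prec hf hg
  | rfind _ hf => exact .rfind hf

theorem RecursiveIn.of_computable {F : ℕ → ℕ} (hF : Computable F) : RecursiveIn O (toPFun F) :=
  .of_partrec (Partrec.nat_iff.1 hF)

end Codes

section Continuity

-- For `l = atTop` this is the use principle, for `l = pure ()` monotonicity in the oracle.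
theorem eventually_mem_evalo {ι : Type*} {l : Filter ι} {A : ι → ℕ →. ℕ} {O : ℕ →. ℕ}
    (hA : ∀ j, ∀ v ∈ O j, ∀ᶠ i in l, v ∈ A i j) (c : OCode) :
    ∀ n, ∀ v ∈ evalo O c n, ∀ᶠ i in l, v ∈ evalo (A i) c n := by
  induction c with
  | zero | succ | left | right => exact fun n v hv => .of_forall fun _ => hv
  | oracle => exact hA
  | pair cf cg hf hg =>
    intro n v hv
    obtain ⟨x, hx, y, hy, rfl⟩ := mem_evalo_pair.1 hv
    filter_upwards [hf n x hx, hg n y hy] with i hxi hyi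
    exact mem_evalo_pair.2 ⟨x, hxi, y, hyi, rfl⟩
  | comp cf cg hf hg =>
    intro n v hv
    obtain ⟨x, hx, hv⟩ := Part.mem_bind_iff.1 hv
    filter_upwards [hg n x hx, hf x v hv] with i hxi hvi
    exact Part.mem_bind hxi hvi
  | prec cf cg hf hg =>
    intro n
    obtain ⟨a, m, rfl⟩ : ∃ a m, n = Nat.pair a m := ⟨_, _, (Nat.pair_unpair n).symm⟩
    induction m with
    | zero => simpa only [evalo_prec_zero] using hf a
    | succ m ih =>
      intro v hv
      simp only [evalo_prec_succ] at hv ⊢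
      obtain ⟨x, hx, hv⟩ := Part.mem_bind_iff.1 hv
      filter_upwards [ih x hx, hg _ v hv] with i hxi hvi
      exact Part.mem_bind hxi hvi
  | rfind' cf hf =>
    intro n v hv
    obtain ⟨a, m, rfl⟩ : ∃ a m, n = Nat.pair a m := ⟨_, _, (Nat.pair_unpair n).symm⟩
    obtain ⟨r, hr, hlt, rfl⟩ := mem_evalo_rfind'.1 hv
    have hlt' : ∀ᶠ i in l, ∀ j ∈ Set.Iio r, ∃ x ∈ evalo (A i) cf (Nat.pair a (j + m)), x ≠ 0 :=
      (eventually_all_finite (Set.finite_Iio r)).2 fun j hj => by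
        obtain ⟨x, hx, hx0⟩ := hlt j hj
        exact (hf _ x hx).mono fun i hxi => ⟨x, hxi, hx0⟩
    filter_upwards [hf _ 0 hr, hlt'] with i hri hlti
    exact mem_evalo_rfind'.2 ⟨r, hri, hlti, rfl⟩

theorem evalo_mono {O P : ℕ →. ℕ} (h : ∀ j, O j ≤ P j) (c : OCode) (n : ℕ) :
    evalo O c n ≤ evalo P c n := fun v hv =>
  eventually_pure.1 (eventually_mem_evalo (l := pure ()) (A := fun _ => P)
    (fun j v hv => eventually_pure.2 (h j v hv)) c n v hv)

theorem exists_forall_evalo_eq_toPFun {F : ℕ → ℕ} (hF : Computable F) :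
    ∃ c, ∀ O, evalo O c = toPFun F := by
  obtain ⟨c, hc⟩ := RecursiveIn.of_computable (O := fun _ => Part.none) hF
  refine ⟨c, fun O => funext fun n => Part.eq_some_iff.2 ?_⟩
  refine evalo_mono (O := fun _ => Part.none) (fun _ => bot_le) c n _ ?_
  simp [hc, toPFun]

theorem partrec₂_evalo {α : Type*} [Primcodable α] {A : α → ℕ →. ℕ} (hA : Partrec₂ A)
    (c : OCode) : Partrec₂ fun a => evalo (A a) c := by
  have fst_unpair : Computable fun p : α × ℕ => p.2.unpair.1 :=
    Computable.fst.comp (Computable.unpair.comp Computable.snd)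
  have snd_unpair : Computable fun p : α × ℕ => p.2.unpair.2 :=
    Computable.snd.comp (Computable.unpair.comp Computable.snd)
  have natPair : Computable₂ Nat.pair := Primrec₂.natPair.to_comp
  induction c with
  | zero => exact (Computable.const 0).partrec
  | succ => exact (Computable.succ.comp Computable.snd).partrec
  | left => exact fst_unpair.partrec
  | right => exact snd_unpair.partrec
  | oracle => exact hA
  | pair cf cg hf hg =>
    refine (Partrec.bind hf (Partrec.map (hg.comp (Computable.fst.comp Computable.fst)
      (Computable.snd.comp Computable.fst))
      (natPair.comp (Computable.snd.comp Computable.fst) Computable.snd).to₂).to₂).of_eq ?_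
    simp [evalo, Seq.seq]
  | comp cf cg hf hg =>
    exact Partrec.bind hg (hf.comp (Computable.fst.comp Computable.fst) Computable.snd).to₂
  | prec cf cg hf hg =>
    exact (Partrec.nat_rec snd_unpair (hf.comp Computable.fst fst_unpair)
      (hg.comp (Computable.fst.comp Computable.fst)
        (natPair.comp (fst_unpair.comp Computable.fst)
          (natPair.comp (Computable.fst.comp Computable.snd)
            (Computable.snd.comp Computable.snd)))).to₂).of_eq fun p => rfl
  | rfind' cf hf =>
    have test : Computable₂ fun (_ : (α × ℕ) × ℕ) (x : ℕ) => decide (x = 0) :=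
      (Primrec.eq.comp Primrec.snd (Primrec.const 0)).decide.to_comp.to₂
    exact (Partrec.map (Partrec.rfind (Partrec.map (hf.comp (Computable.fst.comp Computable.fst)
      (natPair.comp (fst_unpair.comp Computable.fst) (Primrec.nat_add.to_comp.comp Computable.snd
        (snd_unpair.comp Computable.fst)))) test).to₂)
      (Primrec.nat_add.to_comp.comp Computable.snd (snd_unpair.comp Computable.fst)).to₂).of_eq
      fun p => rfl

end Continuity

section Join

theorem pjoin_two_mul (f g : ℕ →. ℕ) (n : ℕ) : pjoin f g (2 * n) = f n := by
  simp [pjoin]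

theorem pjoin_two_mul_add_one (f g : ℕ →. ℕ) (n : ℕ) : pjoin f g (2 * n + 1) = g n := by
  simp [pjoin, Nat.mul_add_div]

theorem partrec₂_pjoin {α : Type*} [Primcodable α] {A B : α → ℕ →. ℕ} (hA : Partrec₂ A)
    (hB : Partrec₂ B) : Partrec₂ fun a => pjoin (A a) (B a) := by
  have half : Computable fun p : α × ℕ => p.2 / 2 :=
    (Primrec.nat_div.comp Primrec.snd (Primrec.const 2)).to_comp
  have even : Computable fun p : α × ℕ => decide (p.2 % 2 = 0) :=
    (PrimrecRel.comp Primrec.eq (Primrec.nat_mod.comp Primrec.snd (Primrec.const 2))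
      (Primrec.const 0)).decide.to_comp
  refine (Partrec.cond even (hA.comp Computable.fst half) (hB.comp Computable.fst half)).of_eq ?_
  intro p
  by_cases h : p.2 % 2 = 0 <;> simp [pjoin, h]

end Join

section Approximation

/-- The stages `A 0, A 1, …` are consistent with the partial function `θ` and eventually
exhibit each of its values. -/
structure Approximates (A : ℕ → ℕ →. ℕ) (θ : ℕ →. ℕ) : Prop where
  le : ∀ k j, A k j ≤ θ j
  eventually_mem : ∀ j, ∀ v ∈ θ j, ∀ᶠ k in atTop, v ∈ A k j

namespace Approximates

variable {A B : ℕ → ℕ →. ℕ} {θ ρ : ℕ →. ℕ}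

theorem mem_iff (h : Approximates A θ) {j v : ℕ} : v ∈ θ j ↔ ∃ k, v ∈ A k j :=
  ⟨fun hv => (h.eventually_mem j v hv).exists, fun ⟨k, hv⟩ => h.le k j v hv⟩

theorem dom_iff (h : Approximates A θ) {j : ℕ} : (θ j).Dom ↔ ∃ k, (A k j).Dom := by
  simp only [Part.dom_iff_mem, h.mem_iff]
  exact exists_comm

theorem evalo (h : Approximates A θ) (c : OCode) :
    Approximates (fun k => evalo (A k) c) (evalo θ c) :=
  ⟨fun k => evalo_mono (h.le k) c, eventually_mem_evalo h.eventually_mem c⟩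

theorem pjoin (hA : Approximates A θ) (hB : Approximates B ρ) :
    Approximates (fun k => pjoin (A k) (B k)) (pjoin θ ρ) := by
  constructor
  · intro k j
    unfold PCAEmb.pjoin
    split_ifs
    exacts [hA.le k _, hB.le k _]
  · intro j
    unfold PCAEmb.pjoin
    split_ifs
    exacts [hA.eventually_mem _, hB.eventually_mem _]

end Approximates

/-- The list `[g 0, …, g (k - 1)]`. -/
def initSeg (g : ℕ → ℕ) (k : ℕ) : List ℕ := (List.range k).map g

/-- A finite list as an oracle, undefined beyond the end of the list. -/
def lookup (σ : List ℕ) : ℕ →. ℕ := fun j => (σ[j]? : Part ℕ)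

theorem partrec₂_lookup : Partrec₂ lookup :=
  Computable.ofOption Computable.list_getElem?

theorem approximates_lookup_initSeg (g : ℕ → ℕ) :
    Approximates (fun k => lookup (initSeg g k)) (toPFun g) where
  le k j v hv := by
    obtain ⟨-, rfl⟩ : j < k ∧ g j = v := by
      simpa [lookup, initSeg, List.getElem?_eq_some_iff] using hv
    exact Part.mem_some _
  eventually_mem j v hv := by
    obtain rfl := Part.mem_some_iff.1 hv
    filter_upwards [eventually_gt_atTop j] with k hk
    simp [lookup, initSeg, hk]

end Approximation

section NormalForm

variable {O ψ : ℕ →. ℕ} {F G g : ℕ → ℕ}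

theorem RecursiveIn.toPFun_comp (hF : RecursiveIn O (toPFun F)) (hG : RecursiveIn O (toPFun G)) :
    RecursiveIn O (toPFun fun n => F (G n)) :=
  (hF.comp hG).of_eq fun n => by simp [toPFun]

theorem RecursiveIn.toPFun_pair (hF : RecursiveIn O (toPFun F)) (hG : RecursiveIn O (toPFun G)) :
    RecursiveIn O (toPFun fun n => Nat.pair (F n) (G n)) :=
  (hF.pair hG).of_eq fun n => by simp [toPFun, Seq.seq]

theorem RecursiveIn.of_graph {T : ℕ → ℕ} (hT : RecursiveIn O (toPFun T))
    (hψ : ∀ n v, v ∈ ψ n ↔ ∃ q, T (Nat.pair n (Nat.pair v q)) = 0) : RecursiveIn O ψ := by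
  have hfst : RecursiveIn O (toPFun fun q => q.unpair.1) := ⟨.left, rfl⟩
  refine (hfst.comp hT.rfind).of_eq fun n => ?_
  have mem_search {q : ℕ} :
      q ∈ (Nat.rfind fun q => (fun x => decide (x = 0)) <$> toPFun T (Nat.pair n q)) ↔
        T (Nat.pair n q) = 0 ∧ ∀ j < q, T (Nat.pair n j) ≠ 0 := by
    rw [mem_rfind_eq_zero]
    simp [toPFun, eq_comm]
  have sound {q : ℕ} (hq : T (Nat.pair n q) = 0) : q.unpair.1 ∈ ψ n :=
    (hψ _ _).2 ⟨q.unpair.2, by simpa using hq⟩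
  refine Part.ext fun v => ⟨fun hv => ?_, fun hv => ?_⟩
  · obtain ⟨q, hq, hqv⟩ := Part.mem_bind_iff.1 hv
    obtain rfl := Part.mem_some_iff.1 hqv
    exact sound (mem_search.1 hq).1
  · have hex : ∃ q, T (Nat.pair n q) = 0 :=
      let ⟨q, hq⟩ := (hψ n v).1 hv
      ⟨_, hq⟩
    obtain rfl := Part.mem_unique hv (sound (Nat.find_spec hex))
    exact Part.mem_bind (mem_search.2 ⟨Nat.find_spec hex, fun j => Nat.find_min hex⟩)
      (Part.mem_some _)

theorem RecursiveIn.toPFun_natRec (z : ℕ) (hF : RecursiveIn O (toPFun F)) :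
    RecursiveIn O (toPFun fun n => n.rec z fun y i => F (Nat.pair y i)) := by
  have h_step : RecursiveIn O (toPFun fun p => p.unpair.2) := ⟨.right, rfl⟩
  have h_zero : RecursiveIn O (toPFun fun _ => z) := .of_computable (.const z)
  have h_pair : RecursiveIn O (toPFun (Nat.pair 0)) :=
    .of_computable (Primrec₂.natPair.to_comp.comp (.const 0) .id)
  refine ((h_zero.prec (hF.toPFun_comp h_step)).comp h_pair).of_eq fun n => ?_
  simp only [toPFun, Part.bind_some, Nat.unpaired, Nat.unpair_pair]
  induction n with
  | zero => rfl
  | succ n ih => exact (congrArg (Part.bind · _) ih).trans (Part.bind_some _ _)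

theorem recursiveIn_encode_initSeg (g : ℕ → ℕ) :
    RecursiveIn (toPFun g) (toPFun fun k => encode (initSeg g k)) := by
  let snoc (a : List ℕ × ℕ) : List ℕ := a.1 ++ [a.2]
  have hsnoc : Computable fun p : ℕ => encode (snoc (ofNat (List ℕ × ℕ) p)) :=
    Computable.encode.comp ((Computable.list_append.comp .fst
      (Computable.list_cons.comp .snd (.const []))).comp (.ofNat _))
  have h_length : RecursiveIn (toPFun g) (toPFun fun p => p.unpair.1) := ⟨.left, rfl⟩
  have h_list : RecursiveIn (toPFun g) (toPFun fun p => p.unpair.2) := ⟨.right, rfl⟩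
  have h_step := (RecursiveIn.of_computable hsnoc).toPFun_comp
    (h_list.toPFun_pair ((RecursiveIn.oracle (toPFun g)).toPFun_comp h_length))
  refine (h_step.toPFun_natRec (encode ([] : List ℕ))).of_eq fun k => congrArg Part.some ?_
  induction k with
  | zero => rfl
  | succ k ih =>
    dsimp only at ih ⊢
    rw [ih]
    simp [snoc, initSeg, List.range_succ]

theorem recursiveIn_of_partrec_initSeg {h : ℕ × List ℕ →. ℕ} (hh : Partrec h)
    (hψ : ∀ n v, v ∈ ψ n ↔ ∃ k, v ∈ h (n, initSeg g k)) : RecursiveIn (toPFun g) ψ := by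
  obtain ⟨c, hc⟩ := Nat.Partrec.Code.exists_code.1 hh
  have mem_h {n v k : ℕ} : v ∈ h (n, initSeg g k) ↔
      ∃ s, c.evaln s (encode (n, initSeg g k)) = some v := by
    simp_rw [← Option.mem_def, ← Nat.Partrec.Code.evaln_complete, hc]
    simp
  let check (a : (ℕ × ℕ × ℕ × ℕ) × List ℕ) : ℕ :=
    if c.evaln a.1.2.2.1 (encode (a.1.1, a.2)) = some a.1.2.1 then 0 else 1
  have hcheck : Computable check := by
    have hevaln : Primrec fun a : (ℕ × ℕ × ℕ × ℕ) × List ℕ =>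
        c.evaln a.1.2.2.1 (encode (a.1.1, a.2)) :=
      Nat.Partrec.Code.primrec_evaln.comp (.pair (.pair
        (.comp .fst (.comp .snd (.comp .snd .fst))) (.const c))
        (.comp .encode (.pair (.comp .fst .fst) .snd)))
    exact (Primrec.ite (Primrec.eq.comp hevaln (.comp .option_some (.comp .fst (.comp .snd .fst))))
      (.const 0) (.const 1)).to_comp
  have hseg : RecursiveIn (toPFun g)
      (toPFun fun p => encode (initSeg g (ofNat (ℕ × ℕ × ℕ × ℕ) p).2.2.2)) :=
    (recursiveIn_encode_initSeg g).toPFun_comp <| .of_computable <|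
      .comp .snd (.comp .snd (.comp .snd (.ofNat _)))
  refine RecursiveIn.of_graph
    ((RecursiveIn.of_computable (hcheck.comp (.ofNat _))).toPFun_comp
      ((RecursiveIn.id _).toPFun_pair hseg)) fun n v => ?_
  have check_eq_zero {s k : ℕ} : check ((n, v, s, k), initSeg g k) = 0 ↔
      c.evaln s (encode (n, initSeg g k)) = some v := by
    simp only [check, ite_eq_left_iff, one_ne_zero, imp_false, not_not]
  rw [hψ]
  simp only [mem_h, ← check_eq_zero]
  exact ⟨fun ⟨k, s, hks⟩ => ⟨encode (s, k), by simpa using hks⟩,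
    fun ⟨q, hq⟩ => ⟨q.unpair.2, q.unpair.1, by simpa using hq⟩⟩

end NormalForm

section Post

theorem turingLE_of_ce1In_compl {X Y : Set ℕ} (hX : CE1In Y X) (hXc : CE1In Y Xᶜ) :
    TuringLE X Y := by
  obtain ⟨c, hc⟩ := hX
  obtain ⟨d, hd⟩ := hXc
  unfold TuringLE
  obtain ⟨g, hg⟩ : ∃ g, chi Y = toPFun g := ⟨_, rfl⟩
  rw [hg] at hc hd ⊢
  have h_lookup : Partrec₂ fun a : ℕ × List ℕ => lookup a.2 :=
    partrec₂_lookup.comp (.comp .snd .fst) .snd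
  have h_halts (e : OCode) (v : ℕ) :
      Partrec fun a : ℕ × List ℕ => (evalo (lookup a.2) e a.1).map fun _ => v :=
    ((partrec₂_evalo h_lookup e).comp .id .fst).map (Computable.const v).to₂
  obtain ⟨h, hh, h_spec⟩ := Partrec.merge' (h_halts c 1) (h_halts d 0)
  have dom_iff (e : OCode) (n : ℕ) :
      (evalo (toPFun g) e n).Dom ↔ ∃ k, (evalo (lookup (initSeg g k)) e n).Dom :=
    ((approximates_lookup_initSeg g).evalo e).dom_iff
  have h_sound {n v k : ℕ} (hv : v ∈ h (n, initSeg g k)) : v = X.indicator (fun _ => 1) n := by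
    rcases (h_spec _).1 v hv with hv | hv <;> obtain ⟨w, hw, rfl⟩ := (Part.mem_map_iff _).1 hv
    · have hn : n ∈ X := (hc n).2 ((dom_iff c n).2 ⟨k, hw.1⟩)
      simp [hn]
    · have hn : n ∉ X := (hd n).2 ((dom_iff d n).2 ⟨k, hw.1⟩)
      simp [hn]
  have h_total (n : ℕ) : ∃ k, (h (n, initSeg g k)).Dom := by
    by_cases hn : n ∈ X
    · exact ((dom_iff c n).1 ((hc n).1 hn)).imp fun k hk => (h_spec _).2.2 (.inl hk)
    · exact ((dom_iff d n).1 ((hd n).1 hn)).imp fun k hk => (h_spec _).2.2 (.inr hk)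
  refine recursiveIn_of_partrec_initSeg hh fun n v => ⟨fun hv => ?_, fun ⟨k, hv⟩ => ?_⟩
  · obtain rfl := Part.mem_some_iff.1 hv
    exact (h_total n).imp fun k hk => h_sound (Part.get_mem hk) ▸ Part.get_mem hk
  · exact Part.mem_some_iff.2 (h_sound hv)

end Post

section Uniform

variable {g : ℕ → ℕ} {ρ : ℕ →. ℕ} {θ : ℕ → ℕ →. ℕ}

theorem exists_computable_eval_eq {α : Type*} [Primcodable α] {A : α → ℕ →. ℕ}
    (hA : Partrec₂ A) : ∃ E : α → Code, Computable E ∧ ∀ a, (E a).eval = A a := by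
  obtain ⟨c, hc⟩ := Nat.Partrec.Code.exists_code.1 hA
  refine ⟨fun a => c.curry (encode a),
    Nat.Partrec.Code.primrec₂_curry.to_comp.comp (.const c) .encode, fun a => funext fun n => ?_⟩
  rw [Nat.Partrec.Code.eval_curry, hc, ← encode_nat n, ← encode_prod_val a n]
  simp [Part.map_id']

/-- The partial functions `θ 0, θ 1, …` are computable in `g`, uniformly in the index:
one computable map sends an index `n` and an initial segment of `g` to a stage of an
approximation of `θ n`. -/
def UniformlyRecursiveIn (g : ℕ → ℕ) (θ : ℕ → ℕ →. ℕ) : Prop :=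
  ∃ A : ℕ × List ℕ → ℕ →. ℕ, Partrec₂ A ∧ ∀ n, Approximates (fun k => A (n, initSeg g k)) (θ n)

theorem RecursiveIn.exists_approximates (hρ : RecursiveIn (toPFun g) ρ) :
    ∃ A : List ℕ → ℕ →. ℕ, Partrec₂ A ∧ Approximates (fun k => A (initSeg g k)) ρ := by
  obtain ⟨c, rfl⟩ := hρ
  exact ⟨fun σ => evalo (lookup σ) c, partrec₂_evalo partrec₂_lookup c,
    (approximates_lookup_initSeg g).evalo c⟩

theorem UniformlyRecursiveIn.evalo_pjoin (hρ : RecursiveIn (toPFun g) ρ)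
    (hθ : UniformlyRecursiveIn g θ) (c : OCode) :
    UniformlyRecursiveIn g fun n => evalo (pjoin ρ (θ n)) c := by
  obtain ⟨R, hR, R_approx⟩ := hρ.exists_approximates
  obtain ⟨A, hA, A_approx⟩ := hθ
  have hR' : Partrec₂ fun a : ℕ × List ℕ => R a.2 := hR.comp (.comp .snd .fst) .snd
  exact ⟨fun a => evalo (pjoin (R a.2) (A a)) c, partrec₂_evalo (partrec₂_pjoin hR' hA) c,
    fun n => (R_approx.pjoin (A_approx n)).evalo c⟩

theorem uniformlyRecursiveIn_iterate {c : OCode} (hρ : RecursiveIn (toPFun g) ρ)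
    (h_zero : RecursiveIn (toPFun g) (θ 0)) (h_succ : ∀ n, θ (n + 1) = evalo (pjoin ρ (θ n)) c) :
    UniformlyRecursiveIn g θ := by
  obtain ⟨R, hR, R_approx⟩ := hρ.exists_approximates
  obtain ⟨Z, hZ, Z_approx⟩ := h_zero.exists_approximates
  obtain ⟨start, start_comp, eval_start⟩ := exists_computable_eval_eq hZ
  have hR' : Partrec₂ fun p : List ℕ × Code => R p.1 := hR.comp (.comp .fst .fst) .snd
  have heval : Partrec₂ fun p : List ℕ × Code => p.2.eval :=
    Nat.Partrec.Code.eval_part.comp (Computable.snd.comp .fst) .snd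
  obtain ⟨next, next_comp, eval_next⟩ :=
    exists_computable_eval_eq (partrec₂_evalo (partrec₂_pjoin hR' heval) c)
  let E (a : ℕ × List ℕ) : Code := Nat.rec (start a.2) (fun _ e => next (a.2, e)) a.1
  have hE : Computable E :=
    .nat_rec .fst (start_comp.comp .snd)
      (next_comp.comp (.pair (.comp .snd .fst) (.comp .snd .snd))).to₂
  refine ⟨fun a => (E a).eval, Nat.Partrec.Code.eval_part.comp (hE.comp .fst) .snd, fun n => ?_⟩
  induction n with
  | zero => simpa [E, eval_start] using Z_approx
  | succ n ih =>
    rw [h_succ]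
    simpa [E, eval_next] using (R_approx.pjoin ih).evalo c

theorem UniformlyRecursiveIn.recursiveIn_apply (hθ : UniformlyRecursiveIn g θ) (m : ℕ) :
    RecursiveIn (toPFun g) fun n => θ n m := by
  obtain ⟨A, hA, A_approx⟩ := hθ
  exact recursiveIn_of_partrec_initSeg (hA.comp .id (.const m)) fun n v => (A_approx n).mem_iff

theorem RecursiveIn.ce1In_setOf_mem {Y : Set ℕ} {ψ : ℕ →. ℕ} (hψ : RecursiveIn (chi Y) ψ) (v : ℕ) :
    CE1In Y {n | v ∈ ψ n} := by
  have htest : Partrec fun w : ℕ => ((if w = v then some 0 else none : Option ℕ) : Part ℕ) :=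
    Computable.ofOption
      (Primrec.ite (Primrec.eq.comp .id (.const v)) (.const (some 0)) (.const none)).to_comp
  obtain ⟨c, hc⟩ := (RecursiveIn.of_partrec (Partrec.nat_iff.1 htest)).comp hψ
  refine ⟨c, fun n => ?_⟩
  change v ∈ ψ n ↔ _
  simp [hc, Part.mem_eq]

end Uniform

section Application

theorem mem_subApp_iff {α : Type*} {app : α → α → Part α} {P : α → Prop} {a b c : Subtype P} :
    c ∈ subApp app P a b ↔ c.1 ∈ app a.1 b.1 := by
  simp only [subApp, Part.mem_bind_iff, Part.mem_assert_iff, Part.mem_some_iff]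
  constructor
  · rintro ⟨d, hd, -, rfl⟩
    exact hd
  · exact fun hc => ⟨c.1, hc, c.2, rfl⟩

theorem mem_k2App_iff {g h c : ℕ → ℕ} :
    c ∈ k2App g h ↔ phi (pjoin (toPFun g) (toPFun h)) (g 0) = toPFun c := by
  constructor
  · rintro ⟨total, rfl⟩
    exact funext fun n => (Part.some_get (total n)).symm
  · intro hc
    unfold k2App
    rw [hc]
    exact ⟨fun _ => trivial, rfl⟩

theorem exists_code_bApp (θ : ℕ →. ℕ) :
    ∃ c, ∀ ρ, bApp θ ρ = Part.some (evalo (pjoin θ ρ) c) := by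
  by_cases h : (θ 0).Dom
  · obtain ⟨e, he⟩ := Part.dom_iff_mem.1 h
    refine ⟨.ofNat e, fun ρ => congrArg Part.some (funext fun n => ?_)⟩
    rw [Part.eq_some_iff.2 he, Part.bind_some, phi]
  · -- Every application is undefined; the code queries `θ ⊕ ρ` at `0`, where it agrees with `θ`.
    have h_none := Part.eq_none_iff'.2 h
    refine ⟨.comp .oracle .zero, fun ρ => congrArg Part.some (funext fun n => ?_)⟩
    have : evalo (pjoin θ ρ) .zero n = Part.some 0 := rfl
    rw [h_none, evalo_comp, this, Part.bind_some, Part.bind_none]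
    exact (pjoin_two_mul θ ρ 0).trans h_none |>.symm

end Application

section Numerals

variable {X : Set ℕ}

/-- The numeral `n` in `K₂^X`: the constant function with value `n`. -/
def K2el.const (X : Set ℕ) (n : ℕ) : K2el X := ⟨fun _ => n, .of_computable (.const n)⟩

instance (X : Set ℕ) : Nontrivial (K2el X) :=
  ⟨K2el.const X 0, K2el.const X 1, fun h => zero_ne_one (congrFun (congrArg Subtype.val h) 0)⟩

/-- The sequence `u` of `X`-computable functions is `X`-computable uniformly in the index. -/
def ComputableSeq (u : ℕ → K2el X) : Prop :=
  RecursiveIn (chi X) (toPFun fun p => (u p.unpair.1).1 p.unpair.2)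

theorem computableSeq_const_succ (X : Set ℕ) : ComputableSeq fun n => K2el.const X (n + 1) :=
  .of_computable (Computable.succ.comp (.comp .fst .unpair))

theorem computableSeq_ite {Z : Set ℕ} [DecidablePred (· ∈ Z)] (hZ : TuringLE Z X) (u w : K2el X) :
    ComputableSeq fun n => if n ∈ Z then u else w := by
  have h_index : RecursiveIn (chi X) (toPFun fun p => p.unpair.1) := ⟨.left, rfl⟩
  have h_arg : RecursiveIn (chi X) (toPFun fun p => p.unpair.2) := ⟨.right, rfl⟩
  let select (a : ℕ × ℕ × ℕ) : ℕ := if a.1 = 1 then a.2.1 else a.2.2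
  have h_select : Computable select :=
    (Primrec.ite (Primrec.eq.comp .fst (.const 1)) (.comp .fst .snd) (.comp .snd .snd)).to_comp
  refine ((RecursiveIn.of_computable (h_select.comp (.ofNat _))).toPFun_comp
    ((hZ.toPFun_comp h_index).toPFun_pair
      ((u.2.toPFun_comp h_arg).toPFun_pair (w.2.toPFun_comp h_arg)))).of_eq fun p => ?_
  by_cases hp : p.unpair.1 ∈ Z <;> simp [toPFun, select, hp]

theorem RecursiveIn.toPFun_natCases {O : ℕ →. ℕ} {F : ℕ → ℕ} (z : ℕ)
    (hF : RecursiveIn O (toPFun F)) : RecursiveIn O (toPFun fun n => n.casesOn z F) := by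
  have h_pred : RecursiveIn O (toPFun fun p => p.unpair.1) := ⟨.left, rfl⟩
  refine ((hF.toPFun_comp h_pred).toPFun_natRec z).of_eq fun n => ?_
  cases n <;> simp [toPFun]

theorem exists_forall_phi_pjoin_const_eq :
    ∃ e, ∀ (G : ℕ → ℕ) (n m : ℕ),
      phi (pjoin (toPFun G) (toPFun fun _ => n)) e m = Part.some (G (Nat.pair n m + 1)) := by
  -- On the oracle `G ⊕ n`, position `1` holds `n` and position `2 (p + 1)` holds `G (p + 1)`.
  obtain ⟨one, h_one⟩ := exists_forall_evalo_eq_toPFun (Computable.const 1)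
  obtain ⟨id, h_id⟩ := exists_forall_evalo_eq_toPFun Computable.id
  obtain ⟨double, h_double⟩ := exists_forall_evalo_eq_toPFun (F := fun p => 2 * (p + 1))
    (Primrec.nat_mul.comp (.const 2) .succ).to_comp
  obtain ⟨e, he⟩ := OCode.ofNat_surjective
    (.comp .oracle (.comp double (.pair (.comp .oracle one) id)))
  refine ⟨e, fun G n m => ?_⟩
  set O := pjoin (toPFun G) (toPFun fun _ => n)
  have h_arg : evalo O (.comp .oracle one) m = Part.some n := by
    rw [evalo_comp_of_eq_some (congrFun (h_one O) m)]
    exact pjoin_two_mul_add_one _ _ 0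
  have h_pair : evalo O (.pair (.comp .oracle one) id) m = Part.some (Nat.pair n m) :=
    Part.eq_some_iff.2 <| mem_evalo_pair.2
      ⟨n, h_arg ▸ Part.mem_some n, m, h_id O ▸ Part.mem_some m, rfl⟩
  have h_index : evalo O (.comp double (.pair (.comp .oracle one) id)) m =
      Part.some (2 * (Nat.pair n m + 1)) := by
    rw [evalo_comp_of_eq_some h_pair, h_double, toPFun]
  rw [phi, he, evalo_comp_of_eq_some h_index]
  exact pjoin_two_mul _ _ (Nat.pair n m + 1)

theorem ComputableSeq.exists_mem_k2XApp_const {u : ℕ → K2el X} (hu : ComputableSeq u) :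
    ∃ x : K2el X, ∀ n, u n ∈ k2XApp X x (K2el.const X n) := by
  obtain ⟨e, he⟩ := exists_forall_phi_pjoin_const_eq
  refine ⟨⟨_, RecursiveIn.toPFun_natCases e hu⟩, fun n =>
    mem_subApp_iff.2 (mem_k2App_iff.2 (funext fun m => (he _ n m).trans ?_))⟩
  simp [toPFun]

end Numerals

section Embedding

/-- `f` preserves defined applications: the part of `IsPCAEmbedding` that remains when
injectivity is dropped. -/
def PreservesApp {α β : Type*} (appA : α → α → Part α) (appB : β → β → Part β) (f : α → β) : Prop :=
  ∀ a a' c, c ∈ appA a a' → f c ∈ appB (f a) (f a')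

variable {X Y : Set ℕ} {f : K2el X → Bel Y}

theorem ComputableSeq.exists_forall_apply_eq_evalo (hf : PreservesApp (k2XApp X) (bXApp Y) f)
    {u : ℕ → K2el X} (hu : ComputableSeq u) :
    ∃ ρ c, RecursiveIn (chi Y) ρ ∧
      ∀ n, (f (u n)).1 = evalo (pjoin ρ (f (K2el.const X n)).1) c := by
  obtain ⟨x, hx⟩ := hu.exists_mem_k2XApp_const
  obtain ⟨c, hc⟩ := exists_code_bApp (f x).1
  refine ⟨(f x).1, c, (f x).2, fun n => Part.mem_some_iff.1 ?_⟩
  rw [← hc]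
  exact mem_subApp_iff.1 (hf _ _ _ (hx n))

theorem ComputableSeq.uniformlyRecursiveIn_apply (hf : PreservesApp (k2XApp X) (bXApp Y) f)
    {u : ℕ → K2el X} (hu : ComputableSeq u) :
    UniformlyRecursiveIn (Y.indicator fun _ => 1) fun n => (f (u n)).1 := by
  obtain ⟨σ, s, hσ, h_succ⟩ := (computableSeq_const_succ X).exists_forall_apply_eq_evalo hf
  obtain ⟨ρ, c, hρ, h_apply⟩ := hu.exists_forall_apply_eq_evalo hf
  have h_const : UniformlyRecursiveIn (Y.indicator fun _ => 1) fun n => (f (K2el.const X n)).1 :=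
    uniformlyRecursiveIn_iterate hσ (f _).2 h_succ
  simpa only [h_apply] using UniformlyRecursiveIn.evalo_pjoin hρ h_const c

theorem ce1In_of_mem_of_notMem (hf : PreservesApp (k2XApp X) (bXApp Y) f) {u w : K2el X} {m v : ℕ}
    (hu : v ∈ (f u).1 m) (hw : v ∉ (f w).1 m) {Z : Set ℕ} (hZ : TuringLE Z X) : CE1In Y Z := by
  classical
  obtain ⟨c, hc⟩ := (((computableSeq_ite hZ u w).uniformlyRecursiveIn_apply hf).recursiveIn_apply m)
    |>.ce1In_setOf_mem v
  refine ⟨c, fun n => Iff.trans ?_ (hc n)⟩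
  by_cases hn : n ∈ Z <;> simp [hn, hu, hw]

theorem turingLE_compl (X : Set ℕ) : TuringLE Xᶜ X := by
  have h_flip : Computable fun b => 1 - b :=
    (Primrec.nat_sub.comp (.const 1) .id).to_comp
  refine ((RecursiveIn.of_computable h_flip).toPFun_comp (.oracle (chi X))).of_eq fun n => ?_
  by_cases hn : n ∈ X <;> simp [toPFun, chi, hn]

theorem turingLE_of_apply_ne (hf : PreservesApp (k2XApp X) (bXApp Y) f) {x y : K2el X}
    (hxy : f x ≠ f y) : TuringLE X Y := by
  obtain ⟨u, w, m, v, hu, hw⟩ : ∃ u w m v, v ∈ (f u).1 m ∧ v ∉ (f w).1 m := by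
    by_contra! h
    exact hxy (Subtype.ext (funext fun m => Part.ext fun v => ⟨h x y m v, h y x m v⟩))
  exact turingLE_of_ce1In_compl (ce1In_of_mem_of_notMem hf hu hw (.oracle _))
    (ce1In_of_mem_of_notMem hf hu hw (turingLE_compl X))

theorem exists_isPCAEmbedding_of_turingLE (h : TuringLE X Y) :
    ∃ f : K2el X → Bel Y, IsPCAEmbedding (k2XApp X) (bXApp Y) f := by
  refine ⟨fun g => ⟨toPFun g.1, g.2.trans h⟩, fun g g' hgg' => ?_, fun g g' c hc => ?_⟩
  · exact Subtype.ext (funext fun n => Part.some_injective (congrFun (congrArg Subtype.val hgg') n))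
  · have h_app := mem_k2App_iff.1 (mem_subApp_iff.1 hc)
    refine mem_subApp_iff.2 (Part.mem_some_iff.2 ?_)
    exact h_app.symm.trans (funext fun n => (Part.bind_some _ _).symm)

end Embedding

theorem stmt13_general (X Y : Set ℕ) :
    List.TFAE [∃ f : K2el X → Bel Y, IsPCAEmbedding (k2XApp X) (bXApp Y) f,
      ∃ f : K2el X → Bel Y, PreservesApp (k2XApp X) (bXApp Y) f ∧ ∃ x y, f x ≠ f y,
      TuringLE X Y] := by
  tfae_have 1 → 2 := fun ⟨f, f_inj, f_hom⟩ =>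
    let ⟨x, y, hxy⟩ := exists_pair_ne (K2el X)
    ⟨f, f_hom, x, y, f_inj.ne hxy⟩
  tfae_have 2 → 3 := fun ⟨_, f_hom, _, _, hxy⟩ => turingLE_of_apply_ne f_hom hxy
  tfae_have 3 → 1 := exists_isPCAEmbedding_of_turingLE
  tfae_finish

theorem stmt13 (X Y : Set ℕ) :
    (∃ f : K2el X → Bel Y, IsPCAEmbedding (k2XApp X) (bXApp Y) f) ↔
      TuringLE X Y :=
  (stmt13_general X Y).out 0 2

end PCAEmb
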